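/- A regular language L ⊆ Σ* over an ordered alphabet (Σ,≺) is Wheeler with respect to (Σ,≺) if and only if every co-lexicographically monotone sequence in Pref(L) is eventually constant modulo ≡_L; that is, for every sequence (α_i)_{i≥0} of words of Pref(L) with α₁ ⪯ α₂ ⪯ … ⪯ α_i ⪯ … or α₁ ⪰ α₂ ⪰ … ⪰ α_i ⪰ …, there exists n such that α_h ≡_L α_k for all h,k ≥ n. -/

import Mathlib

/-!
Common framework: words over an ordered alphabet, co-lexicographic order,
(partial) DFAs and NFAs, Wheeler automata and Wheeler languages,
following "Ordering regular languages: a danger zone".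
-/

namespace WheelerPaper

/-- Strict co-lexicographic order on words: compare the reverses lexicographically. -/
def Colex {A : Type} [LinearOrder A] (x y : List A) : Prop :=
  List.Lex (· < ·) x.reverse y.reverse

/-- Non-strict co-lexicographic order. -/
def ColexLE {A : Type} [LinearOrder A] (x y : List A) : Prop :=
  Colex x y ∨ x = y

/-- Right context `α⁻¹L` of a word `α` with respect to a language `L`. -/
def rc {A : Type} (L : Set (List A)) (α : List A) : Set (List A) :=
  {γ | α ++ γ ∈ L}

/-- `Pref L`: the set of prefixes of words of `L`. -/
def Pref {A : Type} (L : Set (List A)) : Set (List A) :=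
  {α | ∃ β, α ++ β ∈ L}

/-- `wpow γ i` is `γ^i`, the `i`-fold concatenation of the word `γ`. -/
def wpow {A : Type} (γ : List A) : ℕ → List A
  | 0 => []
  | n + 1 => γ ++ wpow γ n

/-- A DFA with a possibly partial transition function. -/
structure PDFA (A : Type) (Q : Type) where
  init : Q
  trans : Q → A → Option Q
  accept : Q → Prop

/-- Extended (partial) transition function of a `PDFA`. -/
def PDFA.evalFrom {A Q : Type} (M : PDFA A Q) : Q → List A → Option Q
  | q, [] => some q
  | q, a :: w => (M.trans q a).bind fun q' => PDFA.evalFrom M q' w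

/-- The language accepted by a `PDFA`. -/
def PDFA.accepts {A Q : Type} (M : PDFA A Q) : Set (List A) :=
  {w | ∃ q, M.evalFrom M.init w = some q ∧ M.accept q}

/-- A `PDFA` is trim if every state is reachable from the initial state and
every state can reach some accepting state. -/
def PDFA.Trim {A Q : Type} (M : PDFA A Q) : Prop :=
  (∀ q : Q, ∃ α, M.evalFrom M.init α = some q) ∧
  (∀ q : Q, ∃ α q', M.evalFrom q α = some q' ∧ M.accept q')

/-- `r` is a Wheeler order for the DFA `M`: a strict total order on states whose
minimum is the initial state, the initial state has no incoming transitions, and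
the two Wheeler conditions hold. -/
def IsWheelerOrder {A Q : Type} [LinearOrder A] (M : PDFA A Q) (r : Q → Q → Prop) : Prop :=
  IsStrictTotalOrder Q r ∧
  (∀ q : Q, q ≠ M.init → r M.init q) ∧
  (∀ (q : Q) (a : A), M.trans q a ≠ some M.init) ∧
  (∀ (u₁ : Q) (a₁ : A) (v₁ : Q) (u₂ : Q) (a₂ : A) (v₂ : Q),
     M.trans u₁ a₁ = some v₁ → M.trans u₂ a₂ = some v₂ →
     (a₁ < a₂ → r v₁ v₂) ∧ (a₁ = a₂ → r u₁ u₂ → (r v₁ v₂ ∨ v₁ = v₂)))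

/-- A language is Wheeler (w.r.t. the given order on the alphabet) if it is
recognized by some Wheeler DFA. -/
def IsWheelerLang {A : Type} [LinearOrder A] (L : Set (List A)) : Prop :=
  ∃ (n : ℕ) (M : PDFA A (Fin n)) (r : Fin n → Fin n → Prop),
    IsWheelerOrder M r ∧ M.accepts = L

/-- A language is regular if it is recognized by some finite-state (partial) DFA. -/
def IsRegular {A : Type} (L : Set (List A)) : Prop :=
  ∃ (k : ℕ) (M : PDFA A (Fin k)), M.accepts = L

/-- The input-consistent convex refinement `≡^c_L` of the Myhill–Nerode
equivalence: same right context, same last character (or both empty), and every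
word of `Pref L` co-lexicographically between the two words has the same right
context. -/
def EquivC {A : Type} [LinearOrder A] (L : Set (List A)) (α β : List A) : Prop :=
  rc L α = rc L β ∧ α.getLast? = β.getLast? ∧
  ∀ γ ∈ Pref L,
    ((ColexLE α γ ∧ ColexLE γ β) ∨ (ColexLE β γ ∧ ColexLE γ α)) →
    rc L γ = rc L α

/-- An NFA with a single initial state. -/
structure NFA' (A : Type) (Q : Type) where
  init : Q
  trans : Q → A → Set Q
  accept : Q → Prop

/-- One step of an `NFA'` on a set of states. -/
def NFA'.stepSet {A Q : Type} (M : NFA' A Q) (S : Set Q) (a : A) : Set Q :=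
  {q | ∃ p ∈ S, q ∈ M.trans p a}

/-- Extended transition function of an `NFA'` on sets of states. -/
def NFA'.evalFrom {A Q : Type} (M : NFA' A Q) : Set Q → List A → Set Q
  | S, [] => S
  | S, a :: w => NFA'.evalFrom M (M.stepSet S a) w

/-- The language accepted by an `NFA'`. -/
def NFA'.accepts {A Q : Type} (M : NFA' A Q) : Set (List A) :=
  {w | ∃ q ∈ M.evalFrom {M.init} w, M.accept q}

/-- An `NFA'` is trim if every state is reachable from the initial state and
every state can reach some accepting state. -/
def NFA'.Trim {A Q : Type} (M : NFA' A Q) : Prop :=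
  (∀ q : Q, ∃ α, q ∈ M.evalFrom {M.init} α) ∧
  (∀ q : Q, ∃ α, ∃ q' ∈ M.evalFrom {q} α, M.accept q')

/-- `r` is a Wheeler order for the NFA `M`. -/
def IsWheelerNFAOrder {A Q : Type} [LinearOrder A] (M : NFA' A Q) (r : Q → Q → Prop) : Prop :=
  IsStrictTotalOrder Q r ∧
  (∀ q : Q, q ≠ M.init → r M.init q) ∧
  (∀ (q : Q) (a : A), M.init ∉ M.trans q a) ∧
  (∀ (u₁ : Q) (a₁ : A) (v₁ : Q) (u₂ : Q) (a₂ : A) (v₂ : Q),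
     v₁ ∈ M.trans u₁ a₁ → v₂ ∈ M.trans u₂ a₂ →
     (a₁ < a₂ → r v₁ v₂) ∧ (a₁ = a₂ → r u₁ u₂ → (r v₁ v₂ ∨ v₁ = v₂)))

/-- `I` is an interval with respect to the strict order `r`. -/
def IsIntervalRel {Q : Type} (r : Q → Q → Prop) (I : Set Q) : Prop :=
  ∀ x y z : Q, (r x y ∨ x = y) → (r y z ∨ y = z) → x ∈ I → z ∈ I → y ∈ I

/-- The class of star-free languages: built from `∅`, `{ε}` and the singletons
`{a}` by union, concatenation and complement. -/
inductive StarFree {A : Type} : Set (List A) → Prop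
  | empty : StarFree ∅
  | eps : StarFree {[]}
  | single (a : A) : StarFree {[a]}
  | union {L₁ L₂ : Set (List A)} : StarFree L₁ → StarFree L₂ → StarFree (L₁ ∪ L₂)
  | concat {L₁ L₂ : Set (List A)} : StarFree L₁ → StarFree L₂ →
      StarFree {w | ∃ u v, u ∈ L₁ ∧ v ∈ L₂ ∧ w = u ++ v}
  | compl {L : Set (List A)} : StarFree L → StarFree Lᶜ


/-- The language of all words over the sub-alphabet `S`. -/
def wordsOver {A : Type} (S : Set A) : Language A := {w | ∀ x ∈ w, x ∈ S}


/-! ### Helper lemmas -/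

theorem colex_iff {A : Type} [LinearOrder A] (x y : List A) :
    Colex x y ↔ x.reverse < y.reverse := Iff.rfl

theorem colexLE_iff {A : Type} [LinearOrder A] (x y : List A) :
    ColexLE x y ↔ x.reverse ≤ y.reverse := by
  rw [le_iff_lt_or_eq, List.reverse_inj]; exact Iff.rfl

theorem snoc_le_snoc {A : Type} [LinearOrder A] (x y : List A) (a b : A) :
    ColexLE (x ++ [a]) (y ++ [b]) ↔ a < b ∨ (a = b ∧ ColexLE x y) := by
  rw [colexLE_iff, colexLE_iff]
  simp only [List.reverse_append, List.reverse_cons, List.reverse_nil, List.nil_append,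
    List.singleton_append]
  rw [le_iff_lt_or_eq, le_iff_lt_or_eq, List.cons_lt_cons_iff, List.cons.injEq]
  tauto

theorem not_snoc_le_nil {A : Type} [LinearOrder A] (x : List A) (a : A) :
    ¬ ColexLE (x ++ [a]) [] := by
  rw [colexLE_iff]; simp

theorem PDFA.evalFrom_snoc {A Q : Type} (M : PDFA A Q) (q : Q) (w : List A) (a : A) :
    M.evalFrom q (w ++ [a]) = (M.evalFrom q w).bind fun p => M.trans p a := by
  induction w generalizing q with
  | nil => simp [PDFA.evalFrom]
  | cons b w ih =>
    simp only [List.cons_append, PDFA.evalFrom]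
    cases M.trans q b with
    | none => rfl
    | some q' => simpa using ih q'

theorem PDFA.evalFrom_append {A Q : Type} (M : PDFA A Q) (q : Q) (w v : List A) :
    M.evalFrom q (w ++ v) = (M.evalFrom q w).bind fun p => M.evalFrom p v := by
  induction w generalizing q with
  | nil => simp [PDFA.evalFrom]
  | cons b w ih =>
    simp only [List.cons_append, PDFA.evalFrom]
    cases M.trans q b with
    | none => rfl
    | some q' => simpa using ih q'

theorem wheeler_mono {A Q : Type} [LinearOrder A] (M : PDFA A Q) (r : Q → Q → Prop)
    (h : IsWheelerOrder M r) (α β : List A) (p q : Q)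
    (hp : M.evalFrom M.init α = some p) (hq : M.evalFrom M.init β = some q)
    (hle : ColexLE α β) : r p q ∨ p = q := by
  obtain ⟨_, hmin, _, hw⟩ := h
  induction α using List.reverseRecOn generalizing β p q with
  | nil =>
    simp only [PDFA.evalFrom, Option.some.injEq] at hp
    subst hp
    by_cases hqi : q = M.init
    · exact Or.inr hqi.symm
    · exact Or.inl (hmin q hqi)
  | append_singleton α a ih =>
    rcases List.eq_nil_or_concat β with rfl | ⟨β, b, rfl⟩
    · exact absurd hle (not_snoc_le_nil _ _)
    · rw [List.concat_eq_append] at *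
      rw [PDFA.evalFrom_snoc, Option.bind_eq_some_iff] at hp hq
      obtain ⟨p', hp', hpt⟩ := hp
      obtain ⟨q', hq', hqt⟩ := hq
      have hh := hw p' a p q' b q hpt hqt
      rcases (snoc_le_snoc _ _ _ _).1 hle with hab | ⟨hab, hle'⟩
      · exact Or.inl (hh.1 hab)
      · rcases ih β p' q' hp' hq' hle' with hr | he
        · exact hh.2 hab hr
        · subst he; subst hab
          rw [hpt] at hqt
          exact Or.inr (Option.some.inj hqt)

theorem stabilize {Q : Type} [Finite Q] (r : Q → Q → Prop) [IsStrictTotalOrder Q r] (s : ℕ → Q)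
    (hm : (∀ i, r (s i) (s (i + 1)) ∨ s i = s (i + 1)) ∨
      (∀ i, r (s (i + 1)) (s i) ∨ s (i + 1) = s i)) : ∃ n, ∀ k, n ≤ k → s n = s k := by
  let _ : PartialOrder Q := partialOrderOfSO r
  have hle : ∀ p q : Q, (r p q ∨ p = q) → p ≤ q := by
    intro p q h
    rcases h with h | h
    · exact le_of_lt (α := Q) h
    · exact le_of_eq h
  rcases hm with hm | hm
  · have hmono : Monotone s := monotone_nat_of_le_succ fun i => hle _ _ (hm i)
    exact WellFoundedGT.monotone_chain_condition ⟨s, hmono⟩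
  · have hmono : Antitone s := antitone_nat_of_succ_le fun i => hle _ _ (hm i)
    exact WellFoundedGT.monotone_chain_condition
      (α := Qᵒᵈ) ⟨fun i => OrderDual.toDual (s i), fun i j hij => hmono hij⟩

theorem forward {A : Type} [LinearOrder A] (L : Set (List A)) (hL : IsWheelerLang L)
    (α : ℕ → List A) (hα : ∀ i, α i ∈ Pref L)
    (hm : (∀ i, ColexLE (α i) (α (i + 1))) ∨ (∀ i, ColexLE (α (i + 1)) (α i))) :
    ∃ n : ℕ, ∀ h k : ℕ, n ≤ h → n ≤ k → rc L (α h) = rc L (α k) := by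
  obtain ⟨m, M, r, hw, rfl⟩ := hL
  have hs : ∀ i, ∃ s, M.evalFrom M.init (α i) = some s := by
    intro i
    obtain ⟨β, q, hq, _⟩ := hα i
    rw [PDFA.evalFrom_append, Option.bind_eq_some_iff] at hq
    obtain ⟨s, hs, _⟩ := hq
    exact ⟨s, hs⟩
  choose s hs using hs
  have key : ∃ n, ∀ k, n ≤ k → s n = s k := by
    have hst := hw.1
    rcases hm with hm | hm
    · exact stabilize r s (Or.inl fun i =>
        wheeler_mono M r hw _ _ _ _ (hs i) (hs (i + 1)) (hm i))
    · exact stabilize r s (Or.inr fun i =>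
        wheeler_mono M r hw _ _ _ _ (hs (i + 1)) (hs i) (hm i))
  obtain ⟨n, hn⟩ := key
  refine ⟨n, fun h k hh hk => ?_⟩
  ext γ
  simp only [rc, PDFA.accepts, Set.mem_ofPred_eq, PDFA.evalFrom_append, hs, ← hn h hh, ← hn k hk]

theorem isWheelerLang_of_finite {A Q : Type} [LinearOrder A] [Finite Q] (M : PDFA A Q)
    (r : Q → Q → Prop) (h : IsWheelerOrder M r) : IsWheelerLang M.accepts := by
  obtain ⟨n, ⟨e⟩⟩ := Finite.exists_equiv_fin Q
  let N : PDFA A (Fin n) :=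
    ⟨e M.init, fun q a => (M.trans (e.symm q) a).map e, fun q => M.accept (e.symm q)⟩
  have hev : ∀ w q, N.evalFrom (e q) w = (M.evalFrom q w).map e := by
    intro w
    induction w with
    | nil => intro q; simp [PDFA.evalFrom]
    | cons a w ih =>
      intro q
      simp only [PDFA.evalFrom, N, Equiv.symm_apply_apply]
      cases M.trans q a with
      | none => rfl
      | some q' => simpa using ih q'
  obtain ⟨hst, hmin, hinit, hw⟩ := h
  refine ⟨n, N, fun x y => r (e.symm x) (e.symm y), ⟨?_, ?_, ?_, ?_⟩, ?_⟩
  · exact (RelEmbedding.preimage e.symm.toEmbedding r).isStrictTotalOrder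
  · intro q hq
    have := hmin (e.symm q) (fun h => hq (by simp [N, ← h]))
    simpa [N] using this
  · intro q a hqa
    simp only [N, Option.map_eq_some_iff] at hqa
    obtain ⟨x, hx, hxe⟩ := hqa
    exact hinit _ a (by rw [hx, e.injective hxe])
  · intro u₁ a₁ v₁ u₂ a₂ v₂ h₁ h₂
    simp only [N, Option.map_eq_some_iff] at h₁ h₂
    obtain ⟨x₁, hx₁, rfl⟩ := h₁
    obtain ⟨x₂, hx₂, rfl⟩ := h₂
    simpa using hw _ _ _ _ _ _ hx₁ hx₂
  · ext w
    have : N.init = e M.init := rfl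
    simp only [PDFA.accepts, Set.mem_ofPred_eq, this, hev, Option.map_eq_some_iff]
    constructor
    · rintro ⟨q, ⟨x, hx, rfl⟩, hq⟩
      exact ⟨x, hx, by simpa [N] using hq⟩
    · rintro ⟨x, hx, hq⟩
      exact ⟨e x, ⟨x, hx, rfl⟩, by simpa [N] using hq⟩

section order
variable {A : Type} [LinearOrder A]

theorem cle_refl (x : List A) : ColexLE x x := Or.inr rfl

theorem cle_trans {x y z : List A} (h : ColexLE x y) (h' : ColexLE y z) : ColexLE x z := by
  rw [colexLE_iff] at *; exact h.trans h'

theorem cle_antisymm {x y : List A} (h : ColexLE x y) (h' : ColexLE y x) : x = y := by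
  rw [colexLE_iff] at *; exact List.reverse_injective (le_antisymm h h')

theorem cle_total (x y : List A) : ColexLE x y ∨ ColexLE y x := by
  rw [colexLE_iff, colexLE_iff]; exact le_total _ _

theorem colex_of_not_cle {x y : List A} (h : ¬ ColexLE y x) : Colex x y := by
  rw [colexLE_iff] at h; exact not_le.1 h

theorem nil_cle (x : List A) : ColexLE [] x := by
  rcases List.eq_nil_or_concat x with rfl | ⟨w, b, rfl⟩
  · exact Or.inr rfl
  · left
    rw [List.concat_eq_append, colex_iff]
    simp

/-- Words between two words ending in `a` end in `a`. -/
theorem between_snoc {x y z : List A} {a : A} (h : ColexLE (x ++ [a]) z)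
    (h' : ColexLE z (y ++ [a])) : ∃ w, z = w ++ [a] ∧ ColexLE x w ∧ ColexLE w y := by
  rcases List.eq_nil_or_concat z with rfl | ⟨w, b, rfl⟩
  · exact absurd h (not_snoc_le_nil _ _)
  · rw [List.concat_eq_append] at *
    rw [snoc_le_snoc] at h h'
    have hab : a = b := by
      rcases h with h | h
      · rcases h' with h' | h'
        · exact absurd h (lt_asymm h')
        · exact h'.1.symm
      · exact h.1
    subst hab
    exact ⟨w, rfl, by simpa using h, by simpa using h'⟩

theorem equivC_refl (L : Set (List A)) (x : List A) : EquivC L x x := by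
  refine ⟨rfl, rfl, fun γ _ h => ?_⟩
  rcases h with h | h <;> rw [cle_antisymm h.1 h.2]

theorem equivC_symm {L : Set (List A)} {x y : List A} (h : EquivC L x y) : EquivC L y x :=
  ⟨h.1.symm, h.2.1.symm, fun γ hγ hb => (h.2.2 γ hγ hb.symm).trans h.1⟩

theorem equivC_trans {L : Set (List A)} {x y z : List A} (h : EquivC L x y)
    (h' : EquivC L y z) : EquivC L x z := by
  refine ⟨h.1.trans h'.1, h.2.1.trans h'.2.1, fun γ hγ hb => ?_⟩
  have h1 := h.2.2 γ hγ
  have h2 := fun hh => (h'.2.2 γ hγ hh).trans h.1.symm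
  rcases cle_total γ y with hy | hy <;> rcases hb with hb | hb
  · exact h1 (Or.inl ⟨hb.1, hy⟩)
  · exact h2 (Or.inr ⟨hb.1, hy⟩)
  · exact h2 (Or.inl ⟨hy, hb.2⟩)
  · exact h1 (Or.inr ⟨hy, hb.2⟩)

theorem rc_snoc {L : Set (List A)} {x y : List A} (h : rc L x = rc L y) (a : A) :
    rc L (x ++ [a]) = rc L (y ++ [a]) := by
  ext γ
  have := Set.ext_iff.1 h (a :: γ)
  simpa [rc] using this

theorem pref_iff {L : Set (List A)} {x : List A} : x ∈ Pref L ↔ (rc L x).Nonempty := Iff.rfl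

theorem pref_of_snoc {L : Set (List A)} {x : List A} {a : A} (h : x ++ [a] ∈ Pref L) :
    x ∈ Pref L := by
  obtain ⟨β, hβ⟩ := h
  exact ⟨a :: β, by simpa using hβ⟩

theorem equivC_snoc {L : Set (List A)} {x y : List A} (h : EquivC L x y) (a : A) :
    EquivC L (x ++ [a]) (y ++ [a]) := by
  refine ⟨rc_snoc h.1 a, by simp, fun γ hγ hb => ?_⟩
  rcases hb with hb | hb
  · obtain ⟨w, rfl, h1, h2⟩ := between_snoc hb.1 hb.2
    exact rc_snoc (h.2.2 w (pref_of_snoc hγ) (Or.inl ⟨h1, h2⟩)) a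
  · obtain ⟨w, rfl, h1, h2⟩ := between_snoc hb.1 hb.2
    exact rc_snoc (h.2.2 w (pref_of_snoc hγ) (Or.inr ⟨h1, h2⟩)) a

theorem equivC_convex {L : Set (List A)} {x y z : List A} (h : EquivC L x y)
    (hz : z ∈ Pref L) (h1 : ColexLE x z) (h2 : ColexLE z y) : EquivC L x z := by
  refine ⟨(h.2.2 z hz (Or.inl ⟨h1, h2⟩)).symm, ?_, fun γ hγ hb => h.2.2 γ hγ (Or.inl ?_)⟩
  · rcases List.eq_nil_or_concat x with rfl | ⟨x, a, rfl⟩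
    · have hy : y = [] := by
        have := h.2.1
        simpa [eq_comm] using this
      subst hy
      rw [cle_antisymm h1 h2]
    · rcases List.eq_nil_or_concat y with rfl | ⟨y, b, rfl⟩
      · have := h.2.1
        simp at this
      · have hab := h.2.1
        simp only [List.concat_eq_append, List.getLast?_append, List.getLast?_singleton,
          Option.some_or, Option.some.injEq] at *
        subst hab
        obtain ⟨w, rfl, _, _⟩ := between_snoc h1 h2
        simp
  · rcases hb with hb | hb
    · exact ⟨hb.1, cle_trans hb.2 h2⟩
    · have : x = z := cle_antisymm h1 (cle_trans hb.1 hb.2)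
      subst this
      exact ⟨hb.1, cle_trans hb.2 h2⟩

theorem equivC_lt {L : Set (List A)} {x y x' y' : List A} (hy : y ∈ Pref L)
    (hx' : x' ∈ Pref L) (h : ColexLE x y) (hxx : EquivC L x x')
    (hyy : EquivC L y y') (hne : ¬ EquivC L x y) : Colex x' y' := by
  apply colex_of_not_cle
  intro hle
  rcases cle_total x' y with h1 | h1
  · exact hne (equivC_trans hxx (equivC_symm
      (equivC_trans hyy (equivC_convex (equivC_symm hyy) hx' hle h1))))
  · exact hne (equivC_convex hxx hy h h1)

/-- The setoid on `Pref L` induced by `≡^c_L`. -/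
def setoidC (L : Set (List A)) : Setoid (Pref L) where
  r x y := EquivC L x y
  iseqv := ⟨fun x => equivC_refl L x, equivC_symm, equivC_trans⟩

/-- If every monotone sequence stabilizes, no infinite monotone sequence of words with the same
last letter can be pairwise inequivalent. -/
theorem no_inc (L : Set (List A)) (R : List A → List A → Prop)
    (hR : R = ColexLE ∨ R = fun x y => ColexLE y x)
    (H : ∀ α : ℕ → List A, (∀ i, α i ∈ Pref L) → (∀ i, R (α i) (α (i + 1))) →
        ∃ n : ℕ, ∀ h k : ℕ, n ≤ h → n ≤ k → rc L (α h) = rc L (α k))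
    (β : ℕ → List A) (hβ : ∀ i, β i ∈ Pref L) (hlast : ∀ i j, (β i).getLast? = (β j).getLast?)
    (hne : ∀ i, ¬ EquivC L (β i) (β (i + 1))) (hm : ∀ i, R (β i) (β (i + 1))) : False := by
  have hγ : ∀ i, ∃ γ ∈ Pref L, R (β i) γ ∧ R γ (β (i + 1)) ∧ rc L γ ≠ rc L (β i) := by
    intro i
    by_contra hcon
    push Not at hcon
    refine hne i ⟨?_, hlast _ _, ?_⟩
    · refine (hcon _ (hβ (i + 1)) (hm i) ?_).symm
      rcases hR with rfl | rfl <;> exact cle_refl _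
    · intro γ hγ hb
      rcases hR with rfl | rfl
      · rcases hb with hb | hb
        · exact hcon γ hγ hb.1 hb.2
        · exact hcon γ hγ (cle_trans (hm i) hb.1) (cle_trans hb.2 (hm i))
      · rcases hb with hb | hb
        · exact hcon γ hγ (cle_trans hb.2 (hm i)) (cle_trans (hm i) hb.1)
        · exact hcon γ hγ hb.2 hb.1
  choose γ hγP h1 h2 h3 using hγ
  obtain ⟨n, hn⟩ := H (fun i => if i % 2 = 0 then β (i / 2) else γ (i / 2))
    (fun i => by
      split_ifs
      · exact hβ _
      · exact hγP _)
    (fun i => by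
      rcases Nat.even_or_odd' i with ⟨c, rfl | rfl⟩
      · have e1 : 2 * c % 2 = 0 := by omega
        have e2 : ¬ (2 * c + 1) % 2 = 0 := by omega
        have e3 : 2 * c / 2 = c := by omega
        have e4 : (2 * c + 1) / 2 = c := by omega
        rw [if_pos e1, if_neg e2, e3, e4]
        exact h1 c
      · have e1 : (2 * c + 1 + 1) % 2 = 0 := by omega
        have e2 : ¬ (2 * c + 1) % 2 = 0 := by omega
        have e3 : (2 * c + 1 + 1) / 2 = c + 1 := by omega
        have e4 : (2 * c + 1) / 2 = c := by omega
        rw [if_pos e1, if_neg e2, e3, e4]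
        exact h2 c)
  have := hn (2 * n + 1) (2 * n) (by omega) (by omega)
  have e1 : 2 * n % 2 = 0 := by omega
  have e2 : ¬ (2 * n + 1) % 2 = 0 := by omega
  have e3 : 2 * n / 2 = n := by omega
  have e4 : (2 * n + 1) / 2 = n := by omega
  rw [if_pos e1, if_neg e2, e3, e4] at this
  exact h3 n this

theorem finite_quot [Finite A] (L : Set (List A))
    (H : ∀ α : ℕ → List A, (∀ i, α i ∈ Pref L) →
        ((∀ i, ColexLE (α i) (α (i + 1))) ∨ (∀ i, ColexLE (α (i + 1)) (α i))) →
        ∃ n : ℕ, ∀ h k : ℕ, n ≤ h → n ≤ k → rc L (α h) = rc L (α k)) :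
    Finite (Quotient (setoidC L)) := by
  by_contra hinf
  rw [not_finite_iff_infinite] at hinf
  let f : Quotient (setoidC L) → Option A := fun q => (q.out : List A).getLast?
  obtain ⟨o, ho⟩ := Finite.exists_infinite_fiber f
  let g := Infinite.natEmbedding (f ⁻¹' {o})
  let β : ℕ → List A := fun i => ((g i).1.out : List A)
  have hβ : ∀ i, β i ∈ Pref L := fun i => (g i).1.out.2
  have hlast : ∀ i, (β i).getLast? = o := fun i => (g i).2
  have hne : ∀ i j, i ≠ j → ¬ EquivC L (β i) (β j) := by
    intro i j hij h
    apply hij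
    apply g.injective
    apply Subtype.ext
    exact Quotient.out_equiv_out.1 h
  have htr : IsTrans (List A) ColexLE := ⟨fun _ _ _ => cle_trans⟩
  obtain ⟨e, he⟩ := exists_increasing_or_nonincreasing_subseq ColexLE β
  have hee : ∀ i, e i ≠ e (i + 1) := fun i h => by
    have := e.injective h
    omega
  rcases he with he | he
  · refine no_inc L ColexLE (Or.inl rfl) (fun α h1 h2 => H α h1 (Or.inl h2)) (fun i => β (e i))
      (fun i => hβ _) (fun i j => (hlast _).trans (hlast _).symm) (fun i => hne _ _ (hee i))
      (fun i => he i (i + 1) (by omega))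
  · refine no_inc L (fun x y => ColexLE y x) (Or.inr rfl) (fun α h1 h2 => H α h1 (Or.inr h2))
      (fun i => β (e i))
      (fun i => hβ _) (fun i j => (hlast _).trans (hlast _).symm) (fun i => hne _ _ (hee i))
      (fun i => (cle_total _ _).resolve_left (he i (i + 1) (by omega)))

open Classical in
/-- The canonical automaton on the classes of `≡^c_L`. -/
noncomputable def canon (L : Set (List A)) (h0 : [] ∈ Pref L) :
    PDFA A (Quotient (setoidC L)) where
  init := Quotient.mk _ ⟨[], h0⟩
  trans q a := if h : (q.out : List A) ++ [a] ∈ Pref L then some (Quotient.mk _ ⟨_, h⟩) else none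
  accept q := (q.out : List A) ∈ L

theorem out_equiv {L : Set (List A)} (x : Pref L) :
    EquivC L ((Quotient.mk (setoidC L) x).out : List A) x :=
  Quotient.mk_out (s := setoidC L) x

theorem canon_trans_iff {L : Set (List A)} (h0 : [] ∈ Pref L) (q v : Quotient (setoidC L))
    (a : A) : (canon L h0).trans q a = some v ↔
      ∃ h : (q.out : List A) ++ [a] ∈ Pref L, Quotient.mk _ ⟨_, h⟩ = v := by
  simp only [canon]
  split_ifs with h
  · simp [h]
  · simp [h]

theorem canon_eval {L : Set (List A)} (h0 : [] ∈ Pref L) (w : List A)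
    (q : Quotient (setoidC L)) : (canon L h0).evalFrom (canon L h0).init w = some q ↔
      ∃ h : w ∈ Pref L, Quotient.mk _ ⟨w, h⟩ = q := by
  induction w using List.reverseRecOn generalizing q with
  | nil =>
    simp [PDFA.evalFrom, canon, h0]
  | append_singleton w a ih =>
    rw [PDFA.evalFrom_snoc, Option.bind_eq_some_iff]
    constructor
    · rintro ⟨p, hp, hpt⟩
      obtain ⟨hw, rfl⟩ := (ih p).1 hp
      obtain ⟨hwa, rfl⟩ := (canon_trans_iff h0 _ _ _).1 hpt
      have he := equivC_snoc (out_equiv (⟨w, hw⟩ : Pref L)) a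
      have hwa' : w ++ [a] ∈ Pref L := by
        rw [pref_iff, ← he.1]; exact hwa
      exact ⟨hwa', Quotient.sound (s := setoidC L) (equivC_symm he)⟩
    · rintro ⟨hwa, rfl⟩
      have hw := pref_of_snoc hwa
      have he := equivC_snoc (out_equiv (⟨w, hw⟩ : Pref L)) a
      refine ⟨_, (ih _).2 ⟨hw, rfl⟩, (canon_trans_iff h0 _ _ _).2 ⟨?_, ?_⟩⟩
      · rw [pref_iff, he.1]; exact hwa
      · exact Quotient.sound (s := setoidC L) he

theorem mem_of_rc {L : Set (List A)} {x y : List A} (h : rc L x = rc L y) : x ∈ L ↔ y ∈ L := by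
  have := Set.ext_iff.1 h []
  simpa [rc] using this

theorem canon_accepts {L : Set (List A)} (h0 : [] ∈ Pref L) : (canon L h0).accepts = L := by
  ext w
  simp only [PDFA.accepts, Set.mem_ofPred_eq, canon_eval]
  constructor
  · rintro ⟨q, ⟨hw, rfl⟩, hacc⟩
    exact (mem_of_rc (out_equiv (⟨w, hw⟩ : Pref L)).1).1 hacc
  · intro hw
    have hp : w ∈ Pref L := ⟨[], by simpa using hw⟩
    exact ⟨_, ⟨hp, rfl⟩, (mem_of_rc (out_equiv (⟨w, hp⟩ : Pref L)).1).2 hw⟩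

theorem canon_wheeler {L : Set (List A)} (h0 : [] ∈ Pref L) :
    IsWheelerOrder (canon L h0) (fun p q => Colex (p.out : List A) (q.out : List A)) := by
  have hinj : Function.Injective
      (fun q : Quotient (setoidC L) => (q.out : List A).reverse) := by
    intro p q h
    have h' : p.out = q.out := Subtype.ext (List.reverse_injective h)
    exact Quotient.out_injective h'
  have hinit : ((canon L h0).init.out : List A) = [] := by
    have := (out_equiv (⟨[], h0⟩ : Pref L)).2.1
    simpa [canon] using this
  refine ⟨?_, ?_, ?_, ?_⟩
  · exact (RelEmbedding.preimage
      (⟨_, hinj⟩ : Quotient (setoidC L) ↪ List A) (· < ·)).isStrictTotalOrder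
  · intro q hq
    rcases nil_cle (q.out : List A) with h | h
    · rw [hinit]; exact h
    · exact absurd (hinj (by simp only; rw [hinit, ← h])) hq
  · intro q a h
    obtain ⟨hp, he⟩ := (canon_trans_iff h0 _ _ _).1 h
    have h1 := (out_equiv (⟨_, hp⟩ : Pref L)).2.1
    rw [he, hinit] at h1
    simp at h1
  · intro u₁ a₁ v₁ u₂ a₂ v₂ h₁ h₂
    obtain ⟨hp₁, rfl⟩ := (canon_trans_iff h0 _ _ _).1 h₁
    obtain ⟨hp₂, rfl⟩ := (canon_trans_iff h0 _ _ _).1 h₂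
    have e₁ := out_equiv (⟨_, hp₁⟩ : Pref L)
    have e₂ := out_equiv (⟨_, hp₂⟩ : Pref L)
    constructor
    · intro ha
      refine equivC_lt hp₂ (Subtype.prop _) ?_ (equivC_symm e₁) (equivC_symm e₂) ?_
      · exact (snoc_le_snoc _ _ _ _).2 (Or.inl ha)
      · intro h
        have := h.2.1
        simp at this
        exact ha.ne this
    · intro ha hu
      by_cases hE : EquivC L ((u₁.out : List A) ++ [a₁]) ((u₂.out : List A) ++ [a₂])
      · exact Or.inr (Quotient.sound (s := setoidC L) hE)
      · exact Or.inl (equivC_lt hp₂ (Subtype.prop _)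
          ((snoc_le_snoc _ _ _ _).2 (Or.inr ⟨ha, Or.inl hu⟩)) (equivC_symm e₁) (equivC_symm e₂) hE)

theorem empty_wheeler : IsWheelerLang (∅ : Set (List A)) := by
  let M : PDFA A Unit := ⟨(), fun _ _ => none, fun _ => False⟩
  have hM : M.accepts = ∅ := by
    ext w
    simp [PDFA.accepts, M]
  rw [← hM]
  refine isWheelerLang_of_finite M (fun _ _ => False) ⟨?_, ?_, ?_, ?_⟩
  · exact { trichotomous := fun _ _ _ _ => rfl, irrefl := fun _ h => h, trans := fun _ _ _ h _ => h }
  · intro q hq; exact hq rfl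
  · intro q a h; simp [M] at h
  · intro _ _ _ _ _ _ h; simp [M] at h

theorem backward [Finite A] (L : Set (List A))
    (H : ∀ α : ℕ → List A, (∀ i, α i ∈ Pref L) →
        ((∀ i, ColexLE (α i) (α (i + 1))) ∨ (∀ i, ColexLE (α (i + 1)) (α i))) →
        ∃ n : ℕ, ∀ h k : ℕ, n ≤ h → n ≤ k → rc L (α h) = rc L (α k)) :
    IsWheelerLang L := by
  rcases L.eq_empty_or_nonempty with rfl | ⟨w, hw⟩
  · exact empty_wheeler
  · have h0 : [] ∈ Pref L := ⟨w, hw⟩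
    have := finite_quot L H
    have h := isWheelerLang_of_finite _ _ (canon_wheeler h0)
    rwa [canon_accepts] at h

end order

section Statement2

/-- Lemma 1 of the paper: a regular language is Wheeler iff
every co-lexicographically monotone sequence of prefixes is eventually constant
modulo the Myhill–Nerode equivalence. -/
theorem statement2 {A : Type} [Fintype A] [LinearOrder A]
    (L : Set (List A)) (hreg : IsRegular L) :
    IsWheelerLang L ↔
      ∀ α : ℕ → List A, (∀ i, α i ∈ Pref L) →
        ((∀ i, ColexLE (α i) (α (i + 1))) ∨ (∀ i, ColexLE (α (i + 1)) (α i))) →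
        ∃ n : ℕ, ∀ h k : ℕ, n ≤ h → n ≤ k → rc L (α h) = rc L (α k) := by
  exact ⟨fun hL α hα hm => forward L hL α hα hm, fun H => backward L H⟩

end Statement2

end WheelerPaper
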